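/- Let B ∈ ℝ^{d×r} satisfy BᵀB = I_r, let Q ∈ ℝ^{d×r} satisfy BᵀQ = 0 and ‖Q‖_F² < 1/4, and let R ∈ ℝ^{r×r} be an upper triangular matrix with positive diagonal entries satisfying RᵀR = I_r + QᵀQ (i.e., R is the R-factor of the QR decomposition of B + Q). Then ‖R − I_r‖_F ≤ 2‖Q‖_F². -/

import Mathlib

open Matrix BigOperators

/-- Frobenius norm of a real matrix. -/
noncomputable def frobNorm {m n : ℕ} (A : Matrix (Fin m) (Fin n) ℝ) : ℝ :=
  Real.sqrt (∑ i, ∑ j, (A i j) ^ 2)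

/-!
Put `E = R - 1`, so that `E + Eᴴ = Qᴴ Q - Eᴴ E`. As `E` is upper triangular with real diagonal,
`2 ‖E‖² ≤ ‖E + Eᴴ‖²`, and since the Gram matrices `Qᴴ Q` and `Eᴴ E` have nonnegative inner product,
the right-hand side is at most `‖Q‖⁴ + ‖E‖⁴`. It remains to see that `‖E‖ ≤ ‖Q‖`. Expanding
`‖R - 1‖²` with `‖R‖² = r + ‖Q‖²` turns this into `r ≤ tr R`, which follows from `log x ≤ x - 1` on
the diagonal of `R`, because `|det R|² = det (1 + Qᴴ Q) ≥ 1`.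
-/

theorem card_le_sum_of_one_le_prod {ι : Type*} {s : Finset ι} {x : ι → ℝ}
    (hpos : ∀ i ∈ s, 0 < x i) (hprod : 1 ≤ ∏ i ∈ s, x i) : (s.card : ℝ) ≤ ∑ i ∈ s, x i := by
  have hlog : 0 ≤ ∑ i ∈ s, Real.log (x i) := by
    rw [← Real.log_prod fun i hi => (hpos i hi).ne']
    exact Real.log_nonneg hprod
  have hle : ∑ i ∈ s, Real.log (x i) ≤ ∑ i ∈ s, (x i - 1) :=
    Finset.sum_le_sum fun i hi => Real.log_le_sub_one_of_pos (hpos i hi)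
  simpa [Finset.sum_sub_distrib] using hlog.trans hle

section Frobenius

attribute [local instance] Matrix.frobeniusNormedAddCommGroup

theorem frobNorm_eq_norm {m n : ℕ} (A : Matrix (Fin m) (Fin n) ℝ) : frobNorm A = ‖A‖ := by
  simp [frobNorm, frobenius_norm_def, Real.sqrt_eq_rpow]

variable {𝕜 l m n : Type*} [RCLike 𝕜] [Fintype l] [Fintype m] [Fintype n]

theorem frobenius_norm_sq (A : Matrix m n 𝕜) : ‖A‖ ^ 2 = ∑ i, ∑ j, ‖A i j‖ ^ 2 := by
  have hnonneg : 0 ≤ ∑ i, ∑ j, ‖A i j‖ ^ 2 := by positivity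
  simp only [frobenius_norm_def, Real.rpow_two, ← Real.sqrt_eq_rpow, Real.sq_sqrt hnonneg]

theorem frobenius_norm_sq_eq_re_trace (A : Matrix m n 𝕜) :
    ‖A‖ ^ 2 = RCLike.re (Aᴴ * A).trace := by
  rw [frobenius_norm_sq, Finset.sum_comm]
  simp only [trace, diag_apply, mul_apply, conjTranspose_apply, RCLike.star_def, RCLike.conj_mul,
    ← RCLike.ofReal_pow, map_sum, RCLike.ofReal_re]

theorem frobenius_norm_sub_sq (A B : Matrix m n 𝕜) :
    ‖A - B‖ ^ 2 = ‖A‖ ^ 2 - 2 * RCLike.re (Aᴴ * B).trace + ‖B‖ ^ 2 := by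
  have hswap : RCLike.re (Bᴴ * A).trace = RCLike.re (Aᴴ * B).trace := by
    rw [← RCLike.conj_re, ← RCLike.star_def, ← trace_conjTranspose, conjTranspose_mul,
      conjTranspose_conjTranspose]
  simp only [frobenius_norm_sq_eq_re_trace, conjTranspose_sub, Matrix.sub_mul, Matrix.mul_sub,
    trace_sub, map_sub, hswap]
  ring

theorem frobenius_norm_conjTranspose_mul_self_le (A : Matrix m n 𝕜) : ‖Aᴴ * A‖ ≤ ‖A‖ ^ 2 := by
  simpa only [sq, frobenius_norm_conjTranspose] using frobenius_norm_mul Aᴴ A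

theorem frobenius_norm_gram_sub_gram_sq_le (A : Matrix l n 𝕜) (B : Matrix m n 𝕜) :
    ‖Aᴴ * A - Bᴴ * B‖ ^ 2 ≤ ‖Aᴴ * A‖ ^ 2 + ‖Bᴴ * B‖ ^ 2 := by
  have hinner : RCLike.re ((Aᴴ * A)ᴴ * (Bᴴ * B)).trace = ‖B * Aᴴ‖ ^ 2 := by
    simp only [frobenius_norm_sq_eq_re_trace, conjTranspose_mul, conjTranspose_conjTranspose,
      Matrix.mul_assoc]
    rw [trace_mul_comm]
    simp only [Matrix.mul_assoc]
  rw [frobenius_norm_sub_sq, hinner]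
  linarith [sq_nonneg ‖B * Aᴴ‖]

theorem two_mul_frobenius_norm_sq_le_of_isUpperTriangular [LinearOrder n] {E : Matrix n n 𝕜}
    (hE : E.IsUpperTriangular) (hdiag : ∀ i, IsSelfAdjoint (E i i)) :
    2 * ‖E‖ ^ 2 ≤ ‖E + Eᴴ‖ ^ 2 := by
  have hentry (i j : n) : ‖E i j‖ ^ 2 + ‖E j i‖ ^ 2 ≤ ‖(E + Eᴴ) i j‖ ^ 2 := by
    rw [Matrix.add_apply, conjTranspose_apply]
    rcases lt_trichotomy i j with hij | rfl | hji
    · simp [hE hij]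
    · have hdouble : E i i + star (E i i) = 2 * E i i := by rw [(hdiag i).star_eq, two_mul]
      rw [hdouble, norm_mul, RCLike.norm_two]
      nlinarith only [sq_nonneg ‖E i i‖]
    · simp [hE hji]
  calc 2 * ‖E‖ ^ 2 = ∑ i, ∑ j, (‖E i j‖ ^ 2 + ‖E j i‖ ^ 2) := by
        simp only [Finset.sum_add_distrib]
        rw [Finset.sum_comm (f := fun i j => ‖E j i‖ ^ 2), ← frobenius_norm_sq, two_mul]
    _ ≤ ∑ i, ∑ j, ‖(E + Eᴴ) i j‖ ^ 2 :=
        Finset.sum_le_sum fun i _ => Finset.sum_le_sum fun j _ => hentry i j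
    _ = ‖E + Eᴴ‖ ^ 2 := (frobenius_norm_sq _).symm

open scoped ComplexOrder

theorem one_le_det_one_add_of_posSemidef [DecidableEq n] {A : Matrix n n 𝕜}
    (hA : A.PosSemidef) : 1 ≤ (1 + A).det := by
  have hherm : (1 + A).IsHermitian := isHermitian_one.add hA.isHermitian
  have heig (i : n) : 1 ≤ hherm.eigenvalues i := by
    have hmem : hherm.eigenvalues i - 1 ∈ spectrum ℝ A := by
      rw [← spectrum.add_mem_add_iff (s := 1)]
      simpa using hherm.eigenvalues_mem_spectrum_real i
    rw [hA.isHermitian.spectrum_real_eq_range_eigenvalues] at hmem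
    obtain ⟨j, hj⟩ := hmem
    linarith [hA.eigenvalues_nonneg j]
  rw [hherm.det_eq_prod_eigenvalues]
  exact_mod_cast Finset.one_le_prod fun i _ => heig i

theorem one_le_norm_det_of_conjTranspose_mul_self_eq [DecidableEq n] {R A : Matrix n n 𝕜}
    (hA : A.PosSemidef) (hRA : Rᴴ * R = 1 + A) : 1 ≤ ‖R.det‖ := by
  have hdet : (1 : 𝕜) ≤ (‖R.det‖ ^ 2 : ℝ) := by
    calc (1 : 𝕜) ≤ (1 + A).det := one_le_det_one_add_of_posSemidef hA
      _ = (‖R.det‖ ^ 2 : ℝ) := by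
          rw [← hRA, det_mul, det_conjTranspose, RCLike.star_def, RCLike.conj_mul,
            RCLike.ofReal_pow]
  exact (one_le_sq_iff₀ (norm_nonneg _)).mp (mod_cast hdet)

variable [LinearOrder n]

theorem card_le_re_trace_of_isUpperTriangular {R : Matrix n n 𝕜} (hR : R.IsUpperTriangular)
    (hdiag : ∀ i, 0 < R i i) (hdet : 1 ≤ ‖R.det‖) :
    (Fintype.card n : ℝ) ≤ RCLike.re R.trace := by
  have hpos (i : n) : 0 < RCLike.re (R i i) := (RCLike.pos_iff.mp (hdiag i)).1
  have hprod : 1 ≤ ∏ i, RCLike.re (R i i) := by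
    refine hdet.trans_eq ?_
    rw [det_of_isUpperTriangular hR, norm_prod]
    refine Finset.prod_congr rfl fun i _ => ?_
    rw [← RCLike.ofReal_re (K := 𝕜) ‖R i i‖, RCLike.norm_of_nonneg' (hdiag i).le]
  simpa [trace] using card_le_sum_of_one_le_prod (fun i _ => hpos i) hprod

theorem frobenius_norm_sub_one_sq_le {Q : Matrix m n 𝕜} {R : Matrix n n 𝕜}
    (hR : R.IsUpperTriangular) (hdiag : ∀ i, 0 < R i i) (hRQ : Rᴴ * R = 1 + Qᴴ * Q) :
    ‖R - 1‖ ^ 2 ≤ ‖Q‖ ^ 2 := by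
  have htrace : (Fintype.card n : ℝ) ≤ RCLike.re R.trace :=
    card_le_re_trace_of_isUpperTriangular hR hdiag <|
      one_le_norm_det_of_conjTranspose_mul_self_eq (posSemidef_conjTranspose_mul_self Q) hRQ
  have hnormR : ‖R‖ ^ 2 = Fintype.card n + ‖Q‖ ^ 2 := by
    simp [frobenius_norm_sq_eq_re_trace, hRQ]
  have hone : ‖(1 : Matrix n n 𝕜)‖ ^ 2 = Fintype.card n := by
    simp [frobenius_norm_sq_eq_re_trace]
  have hcross : RCLike.re (Rᴴ * 1).trace = RCLike.re R.trace := by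
    simp [trace_conjTranspose]
  rw [frobenius_norm_sub_sq, hnormR, hone, hcross]
  linarith

theorem qr_perturbation_R_sub_one_general {Q : Matrix m n 𝕜} {R : Matrix n n 𝕜}
    (hR : R.IsUpperTriangular) (hdiag : ∀ i, 0 < R i i) (hRQ : Rᴴ * R = 1 + Qᴴ * Q) :
    ‖R - 1‖ ≤ ‖Q‖ ^ 2 := by
  have hsum : (R - 1) + (R - 1)ᴴ = Qᴴ * Q - (R - 1)ᴴ * (R - 1) := by
    rw [← sub_eq_iff_eq_add'.mpr hRQ, conjTranspose_sub, conjTranspose_one]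
    noncomm_ring
  have hself (i : n) : IsSelfAdjoint ((R - 1) i i) := by
    simpa using (IsSelfAdjoint.of_nonneg (hdiag i).le).sub (.one 𝕜)
  have hE : ‖R - 1‖ ^ 2 ≤ ‖Q‖ ^ 2 := frobenius_norm_sub_one_sq_le hR hdiag hRQ
  have hsq : 2 * ‖R - 1‖ ^ 2 ≤ 2 * (‖Q‖ ^ 2) ^ 2 :=
    calc 2 * ‖R - 1‖ ^ 2
        ≤ ‖(R - 1) + (R - 1)ᴴ‖ ^ 2 :=
          two_mul_frobenius_norm_sq_le_of_isUpperTriangular (hR.sub blockTriangular_one) hself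
      _ ≤ ‖Qᴴ * Q‖ ^ 2 + ‖(R - 1)ᴴ * (R - 1)‖ ^ 2 := by
          rw [hsum]
          exact frobenius_norm_gram_sub_gram_sq_le Q (R - 1)
      _ ≤ (‖Q‖ ^ 2) ^ 2 + (‖R - 1‖ ^ 2) ^ 2 := by
          gcongr <;> exact frobenius_norm_conjTranspose_mul_self_le _
      _ ≤ (‖Q‖ ^ 2) ^ 2 + (‖Q‖ ^ 2) ^ 2 := by gcongr
      _ = 2 * (‖Q‖ ^ 2) ^ 2 := (two_mul _).symm
  exact le_of_sq_le_sq (by linarith) (by positivity)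

end Frobenius

/-- Perturbation of the QR decomposition, first conclusion:
the R-factor of B + Q satisfies ‖R − I‖_F ≤ 2‖Q‖_F². -/
theorem qr_perturbation_R_sub_one
    (d r : ℕ)
    (B Q : Matrix (Fin d) (Fin r) ℝ)
    (hB : Bᵀ * B = 1) (hBQ : Bᵀ * Q = 0)
    (hQ : frobNorm Q ^ 2 < 1 / 4)
    (R : Matrix (Fin r) (Fin r) ℝ)
    (hRtri : R.BlockTriangular id)
    (hRdiag : ∀ i, 0 < R i i)
    (hR : Rᵀ * R = 1 + Qᵀ * Q) :
    frobNorm (R - 1) ≤ 2 * frobNorm Q ^ 2 := by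
  have hsharp : frobNorm (R - 1) ≤ frobNorm Q ^ 2 := by
    simpa only [frobNorm_eq_norm] using qr_perturbation_R_sub_one_general hRtri hRdiag hR
  linarith [sq_nonneg (frobNorm Q)]
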